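/- arXiv:2603.09507 — 3 statements merged into one kernel-verified Lean document; each statement's English description precedes it below -/
import Mathlib

section
/- Let X and H be real Hilbert spaces and G and G′ real normed spaces. Let ι : H → G be an injective compact continuous linear operator, let D : H → G′ be a continuous linear operator such that ‖y‖_H² = ‖ι y‖_G² + ‖D y‖_{G′}² for all y ∈ H, and let τ : H → X be a continuous linear operator. Let E : X → H and R : H → H be continuous linear operators with τ ∘ E = id_X and τ ∘ R = 0, and let κ > 0. Then there exists ν > 0 such that ‖ι(E v + R(E v))‖_G² + κ · ‖D(E v)‖_{G′}² ≥ ν · ‖v‖_X² for all v ∈ X. -/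
/-!
The graph norm of `(ι, D)` controls `‖E v‖`, and `τ` recovers `v` from `E v`, so
`v ↦ (ι (E v), D (E v))` is bounded below. Its first component is compact, and in such an estimate
a compact component may be traded for any other bounded operator that keeps the pair injective:
the new pair still maps closed bounded sets to closed sets, so the image of a shell around `0`,
which misses `0`, stays away from it. The replacement here is `v ↦ ι (E v + R (E v))`, already
injective on its own because `τ (E v + R (E v)) = v`.
-/

open Set Function

section Topology

variable {α β γ : Type*} [TopologicalSpace α] [TopologicalSpace β] [TopologicalSpace γ]

theorem isClosed_image_fst_of_subset_univ_prod {t : Set (α × β)} {k : Set β} (ht : IsClosed t)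
    (hk : IsCompact k) (htk : t ⊆ univ ×ˢ k) : IsClosed (Prod.fst '' t) := by
  have : CompactSpace k := isCompact_iff_compactSpace.mp hk
  have himage : Prod.fst '' t = Prod.fst '' (Prod.map id ((↑) : k → β) ⁻¹' t) := by
    ext a
    constructor
    · rintro ⟨p, hp, rfl⟩
      exact ⟨(p.1, ⟨p.2, (htk hp).2⟩), hp, rfl⟩
    · rintro ⟨p, hp, rfl⟩
      exact ⟨_, hp, rfl⟩
  rw [himage]
  exact isClosedMap_fst_of_compactSpace _
    (ht.preimage (continuous_id.prodMap continuous_subtype_val))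

theorem isClosed_image_of_isClosedMap_prodMk {f : α → β} {g : α → γ} {s : Set α} {k : Set γ}
    (hfg : IsClosedMap fun x ↦ (f x, g x)) (hs : IsClosed s) (hk : IsCompact k)
    (hgs : MapsTo g s k) : IsClosed (f '' s) := by
  have hclosed : IsClosed (Prod.fst '' ((fun x ↦ (f x, g x)) '' s)) := by
    refine isClosed_image_fst_of_subset_univ_prod (hfg s hs) hk ?_
    rintro _ ⟨x, hx, rfl⟩
    exact ⟨mem_univ _, hgs hx⟩
  rwa [image_image] at hclosed

end Topology

section BoundedBelow

variable {𝕜 E F G G' : Type*} [NontriviallyNormedField 𝕜]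
  [NormedAddCommGroup E] [NormedSpace 𝕜 E] [NormedAddCommGroup F] [NormedSpace 𝕜 F]
  [NormedAddCommGroup G] [NormedSpace 𝕜 G] [NormedAddCommGroup G'] [NormedSpace 𝕜 G']

theorem exists_antilipschitzWith_of_le_norm_on_shell (A : E →ₗ[𝕜] F) {c : 𝕜} (hc : 1 < ‖c‖)
    {ε : ℝ} (hε : 0 < ε) (hA : ∀ x, 1 ≤ ‖x‖ → ‖x‖ ≤ ‖c‖ → ε ≤ ‖A x‖) :
    ∃ C, AntilipschitzWith C A := by
  have hc₀ : 0 < ‖c‖ := one_pos.trans hc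
  refine antilipschitzWith_iff_exists_mul_le_norm.mpr ⟨ε / ‖c‖, by positivity, fun x ↦ ?_⟩
  obtain rfl | hx := eq_or_ne x 0
  · simp
  obtain ⟨n, hn, hlt, hle, -⟩ := rescale_to_shell_zpow hc hc₀ hx
  rw [div_self hc₀.ne'] at hle
  have hscaled : ε / ‖c‖ * ‖c ^ n • x‖ ≤ ‖A (c ^ n • x)‖ := calc
    ε / ‖c‖ * ‖c ^ n • x‖ ≤ ε / ‖c‖ * ‖c‖ := by gcongr
    _ = ε := div_mul_cancel₀ ε hc₀.ne'
    _ ≤ ‖A (c ^ n • x)‖ := hA _ hle hlt.le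
  rw [map_smul, norm_smul, norm_smul, mul_left_comm] at hscaled
  exact le_of_mul_le_mul_left hscaled (norm_pos_iff.mpr hn)

theorem exists_antilipschitzWith_of_isClosed_image (A : E →ₗ[𝕜] F) (hA : Injective A)
    (hclosed : ∀ s : Set E, IsClosed s → Bornology.IsBounded s → IsClosed (A '' s)) :
    ∃ C, AntilipschitzWith C A := by
  obtain ⟨c, hc⟩ := NormedField.exists_one_lt_norm 𝕜
  let shell : Set E := {x | 1 ≤ ‖x‖ ∧ ‖x‖ ≤ ‖c‖}
  have hshell_closed : IsClosed shell :=
    (isClosed_le continuous_const continuous_norm).inter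
      (isClosed_le continuous_norm continuous_const)
  have hshell_bounded : Bornology.IsBounded shell :=
    isBounded_iff_forall_norm_le.mpr ⟨‖c‖, fun _ hx ↦ hx.2⟩
  have hzero : (0 : F) ∉ A '' shell := by
    rintro ⟨x, hx, hAx⟩
    obtain rfl : x = 0 := (map_eq_zero_iff A hA).mp hAx
    exact absurd hx.1 (by simp)
  obtain ⟨ε, hε, hball⟩ := Metric.isOpen_iff.mp
    (hclosed shell hshell_closed hshell_bounded).isOpen_compl 0 hzero
  refine exists_antilipschitzWith_of_le_norm_on_shell A hc hε fun x hx₁ hxc ↦ ?_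
  by_contra! hlt
  exact hball (mem_ball_zero_iff.mpr hlt) ⟨x, ⟨hx₁, hxc⟩, rfl⟩

theorem exists_antilipschitzWith_of_prod_isCompactOperator [CompleteSpace E]
    {A : E →L[𝕜] F} {K : E →L[𝕜] G} (hK : IsCompactOperator K) {C : NNReal}
    (hAK : AntilipschitzWith C (A.prod K)) (hA : Injective A) :
    ∃ C', AntilipschitzWith C' A := by
  refine exists_antilipschitzWith_of_isClosed_image A.toLinearMap hA fun s hs hs_bounded ↦ ?_
  obtain ⟨k, hk, hKs⟩ := hK.image_subset_compact_of_bounded (f := K.toLinearMap) hs_bounded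
  exact isClosed_image_of_isClosedMap_prodMk
    (hAK.isClosedEmbedding (A.prod K).uniformContinuous).isClosedMap hs hk
    (mapsTo_iff_image_subset.mpr hKs)

theorem exists_antilipschitzWith_prod_of_isCompactOperator [CompleteSpace E]
    {K : E →L[𝕜] G} (hK : IsCompactOperator K) {D : E →L[𝕜] G'} {C : NNReal}
    (hKD : AntilipschitzWith C (K.prod D)) {P : E →L[𝕜] F} (hPD : Injective (P.prod D)) :
    ∃ C', AntilipschitzWith C' (P.prod D) := by
  refine exists_antilipschitzWith_of_prod_isCompactOperator (C := C) hK ?_ hPD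
  refine ContinuousLinearMap.antilipschitz_of_bound _ fun x ↦ ?_
  calc
    ‖x‖ ≤ C * ‖(K.prod D) x‖ := hKD.le_mul_norm (map_zero _) x
    _ ≤ C * ‖((P.prod D).prod K) x‖ := by
      gcongr
      exact max_le (le_max_right _ _) ((le_max_right _ _).trans (le_max_left _ _))

theorem antilipschitzWith_prod_of_norm_sq_le {A : E →L[𝕜] F} {B : E →L[𝕜] G}
    (h : ∀ x, ‖x‖ ^ 2 ≤ ‖A x‖ ^ 2 + ‖B x‖ ^ 2) :
    AntilipschitzWith (NNReal.sqrt 2) (A.prod B) := by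
  refine ContinuousLinearMap.antilipschitz_of_bound _ fun x ↦ ?_
  refine le_of_sq_le_sq ?_ (by positivity)
  calc
    ‖x‖ ^ 2 ≤ ‖A x‖ ^ 2 + ‖B x‖ ^ 2 := h x
    _ ≤ ‖(A.prod B) x‖ ^ 2 + ‖(A.prod B) x‖ ^ 2 := by
      gcongr
      · exact norm_fst_le ((A.prod B) x)
      · exact norm_snd_le ((A.prod B) x)
    _ = (NNReal.sqrt 2 * ‖(A.prod B) x‖) ^ 2 := by
      rw [mul_pow, Real.coe_sqrt, NNReal.coe_ofNat, Real.sq_sqrt zero_le_two, two_mul]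

theorem exists_mul_norm_sq_le_of_antilipschitzWith_prod {A : E →L[𝕜] F} {B : E →L[𝕜] G}
    {C : NNReal} (hAB : AntilipschitzWith C (A.prod B)) {κ : ℝ} (hκ : 0 < κ) :
    ∃ ν > 0, ∀ x, ν * ‖x‖ ^ 2 ≤ ‖A x‖ ^ 2 + κ * ‖B x‖ ^ 2 := by
  obtain ⟨c, hc, hbound⟩ := antilipschitzWith_iff_exists_mul_le_norm.mp ⟨C, hAB⟩
  refine ⟨min 1 κ * c ^ 2, by positivity, fun x ↦ ?_⟩
  have hmax : ‖(A.prod B) x‖ ^ 2 ≤ ‖A x‖ ^ 2 + ‖B x‖ ^ 2 := by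
    rw [ContinuousLinearMap.prod_apply, Prod.norm_def]
    rcases max_choice ‖A x‖ ‖B x‖ with h | h <;> simp only [h] <;> nlinarith
  calc
    min 1 κ * c ^ 2 * ‖x‖ ^ 2 = min 1 κ * (c * ‖x‖) ^ 2 := by ring
    _ ≤ min 1 κ * ‖(A.prod B) x‖ ^ 2 := by gcongr; exact hbound x
    _ ≤ min 1 κ * (‖A x‖ ^ 2 + ‖B x‖ ^ 2) := by gcongr
    _ = min 1 κ * ‖A x‖ ^ 2 + min 1 κ * ‖B x‖ ^ 2 := mul_add _ _ _
    _ ≤ 1 * ‖A x‖ ^ 2 + κ * ‖B x‖ ^ 2 := by gcongr <;> simp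
    _ = ‖A x‖ ^ 2 + κ * ‖B x‖ ^ 2 := by rw [one_mul]

end BoundedBelow

theorem second_derivative_coercive_general
    {𝕜 X H G G' : Type*} [NontriviallyNormedField 𝕜]
    [NormedAddCommGroup X] [NormedSpace 𝕜 X] [CompleteSpace X]
    [NormedAddCommGroup H] [NormedSpace 𝕜 H]
    [NormedAddCommGroup G] [NormedSpace 𝕜 G]
    [NormedAddCommGroup G'] [NormedSpace 𝕜 G']
    (ι : H →L[𝕜] G) (hι_inj : Injective ι) (hι_cpt : IsCompactOperator ι)
    (D : H →L[𝕜] G') {C : NNReal} (hιD : AntilipschitzWith C (ι.prod D))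
    (τ : H →L[𝕜] X) (E : X →L[𝕜] H) (R : H →L[𝕜] H)
    (hτE : ∀ v, τ (E v) = v) (hτR : ∀ y, τ (R y) = 0) {κ : ℝ} (hκ : 0 < κ) :
    ∃ ν > 0, ∀ v, ν * ‖v‖ ^ 2 ≤ ‖ι (E v + R (E v))‖ ^ 2 + κ * ‖D (E v)‖ ^ 2 := by
  let state : X →L[𝕜] G := ι ∘L (E + R ∘L E)
  have hE : AntilipschitzWith ‖τ‖₊ E := τ.lipschitz.to_rightInverse hτE
  have hgraph : AntilipschitzWith (‖τ‖₊ * C) ((ι ∘L E).prod (D ∘L E)) := hιD.comp hE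
  have hτ_left : LeftInverse τ (E + R ∘L E) := fun v ↦ by simp [hτE, hτR]
  have hstate_inj : Injective state := hι_inj.comp hτ_left.injective
  have hpair_inj : Injective (state.prod (D ∘L E)) :=
    fun _ _ h ↦ hstate_inj (congrArg Prod.fst h)
  obtain ⟨C', hC'⟩ := exists_antilipschitzWith_prod_of_isCompactOperator
    (K := ι ∘L E) (hι_cpt.comp_clm E) hgraph hpair_inj
  exact exists_mul_norm_sq_le_of_antilipschitzWith_prod hC' hκ

/-- Lemma 3.3 (abstract form): coercivity of the second derivative of the objective
functional. Here `ι` plays the role of the compact embedding `H¹(Ω) ↪ L²(Ω)`, `D` the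
gradient, `τ` the trace, `E` the harmonic extension and `R` the map `w ↦ η_w` with range
in `ker τ`. -/
theorem second_derivative_coercive
    {X : Type*} [NormedAddCommGroup X] [InnerProductSpace ℝ X] [CompleteSpace X]
    {H : Type*} [NormedAddCommGroup H] [InnerProductSpace ℝ H] [CompleteSpace H]
    {G : Type*} [NormedAddCommGroup G] [NormedSpace ℝ G]
    {G' : Type*} [NormedAddCommGroup G'] [NormedSpace ℝ G']
    (ι : H →L[ℝ] G) (hι_inj : Function.Injective ι) (hι_cpt : IsCompactOperator ι)
    (D : H →L[ℝ] G')
    (hnorm : ∀ y : H, ‖y‖ ^ 2 = ‖ι y‖ ^ 2 + ‖D y‖ ^ 2)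
    (τ : H →L[ℝ] X)
    (E : X →L[ℝ] H) (R : H →L[ℝ] H)
    (hτE : ∀ v : X, τ (E v) = v)
    (hτR : ∀ y : H, τ (R y) = 0)
    (κ : ℝ) (hκ : 0 < κ) :
    ∃ ν > 0, ∀ v : X,
      ‖ι (E v + R (E v))‖ ^ 2 + κ * ‖D (E v)‖ ^ 2 ≥ ν * ‖v‖ ^ 2 :=
  second_derivative_coercive_general ι hι_inj hι_cpt D
    (antilipschitzWith_prod_of_norm_sq_le fun y ↦ (hnorm y).le) τ E R hτE hτR hκ
end

section
/- Let X and H be real Hilbert spaces and G and G′ real normed spaces. Let ι : H → G be an injective compact continuous linear operator, let D : H → G′ be a continuous linear operator such that ‖y‖_H² = ‖ι y‖_G² + ‖D y‖_{G′}² for all y ∈ H, and let τ : H → X be a continuous linear operator. Let E : X → H and R : H → H be continuous linear operators with τ ∘ E = id_X and τ ∘ R = 0, and let κ > 0. For each n ∈ ℕ let U_n ⊆ X be a linear subspace and let E_n : X → H and R_n : H → H be continuous linear operators such that: (i) sup_n ‖E_n‖ < ∞; (ii) τ(E_n v) = v for every v ∈ U_n; (iii) ‖R_n − R‖ → 0 in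 operator norm as n → ∞; (iv) for every continuous linear functional g on H, the functionals g ∘ E_n converge to g ∘ E in the norm of the dual of X. Then there exist ν* > 0 and N ∈ ℕ such that for all n ≥ N and all v ∈ U_n: ‖ι(E_n v + R_n(E_n v))‖_G² + κ · ‖D(E_n v)‖_{G′}² ≥ ν* · ‖v‖_X². -/
/-!
With `S_A y = (ι (y + A y), √κ • D y)`, the discrete quadratic form at `v` is `‖S_{Rₙ} (Eₙ v)‖ ^ 2`.
Since `y` is controlled by `ι y` and `D y`, hence by `S_R y` and the compact term `ι y`, Peetre's
argument bounds the distance of `y` to `ker S_R` by a multiple of `‖S_R y‖`. If `S_R y = 0` then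
`y = -R y`, so `τ y = 0`; consequently `c * ‖τ y‖ ≤ ‖S_R y‖` for all `y` and some `c > 0`. This
inequality survives the perturbation `Rₙ → R` for those `y` with `‖y‖ ≤ M * ‖τ y‖`, and `y = Eₙ v`
is such a vector, with `τ y = v`.
-/

open Filter Topology
open scoped NNReal

section Peetre

variable {𝕜 H F G X : Type*} [NontriviallyNormedField 𝕜]

theorem mul_norm_mkQ_ker_le_of_shell [SeminormedAddCommGroup H] [NormedSpace 𝕜 H]
    [SeminormedAddCommGroup F] [NormedSpace 𝕜 F] {S : H →L[𝕜] F} {c : 𝕜} (hc : 1 < ‖c‖) {δ : ℝ}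
    (hδ : ∀ y, ‖y‖ < 1 → ‖c‖⁻¹ ≤ ‖S.ker.mkQ y‖ → δ ≤ ‖S y‖) (y : H) :
    δ * ‖S.ker.mkQ y‖ ≤ ‖S y‖ := by
  by_cases hy : ‖S.ker.mkQ y‖ = 0
  · simp only [hy, mul_zero, norm_nonneg]
  obtain ⟨d, hd, hd_lt, hd_ge, -⟩ := rescale_to_shell_semi_normed hc one_pos hy
  obtain ⟨m, hm, hm_lt⟩ := Submodule.Quotient.norm_mk_lt (d • S.ker.mkQ y) (sub_pos.2 hd_lt)
  have hSm : S m = d • S y := by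
    rw [← map_smul, ← sub_eq_zero, ← map_sub]
    exact (Submodule.Quotient.eq _).1 hm
  have hδm : δ ≤ ‖S m‖ := hδ m (by linarith) (by simpa [hm] using hd_ge)
  refine le_of_mul_le_mul_left ?_ (norm_pos_iff.2 hd)
  calc ‖d‖ * (δ * ‖S.ker.mkQ y‖) = ‖d • S.ker.mkQ y‖ * δ := by rw [norm_smul]; ring
    _ ≤ ‖d • S.ker.mkQ y‖ * ‖S m‖ := by gcongr
    _ ≤ ‖S m‖ := mul_le_of_le_one_left (norm_nonneg _) hd_lt.le
    _ = ‖d‖ * ‖S y‖ := by rw [hSm, norm_smul]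

theorem norm_le_opNorm_mul_norm_mkQ [SeminormedAddCommGroup H] [NormedSpace 𝕜 H]
    [SeminormedAddCommGroup X] [NormedSpace 𝕜 X] (T : H →L[𝕜] X) {N : Submodule 𝕜 H}
    (hN : N ≤ T.ker) (y : H) : ‖T y‖ ≤ ‖T‖ * ‖N.mkQ y‖ := by
  let f : NormedAddGroupHom H X := (T : H →+ X).mkNormedAddGroupHom ‖T‖ T.le_opNorm
  have hf : ‖f‖ ≤ ‖T‖ := AddMonoidHom.mkNormedAddGroupHom_norm_le _ (norm_nonneg T) T.le_opNorm
  have hfy : ‖T y‖ ≤ ‖f‖ * ‖N.mkQ y‖ :=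
    QuotientAddGroup.norm_lift_apply_le (S := N.toAddSubgroup) f (fun _ hx ↦ hN hx) (N.mkQ y)
  exact hfy.trans (by gcongr)

variable [NormedAddCommGroup H] [NormedSpace 𝕜 H] [CompleteSpace H]
  [NormedAddCommGroup F] [NormedSpace 𝕜 F] [NormedAddCommGroup G] [NormedSpace 𝕜 G]
  {S : H →L[𝕜] F} {K : H →L[𝕜] G} {C : ℝ≥0}

theorem exists_tendsto_subseq_of_antilipschitzWith_prod (hK : IsCompactOperator K)
    (hSK : AntilipschitzWith C (S.prod K)) {y : ℕ → H} {M : ℝ} (hy : ∀ n, ‖y n‖ ≤ M) {a : F}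
    (hS : Tendsto (fun n ↦ S (y n)) atTop (𝓝 a)) :
    ∃ z, ∃ φ : ℕ → ℕ, StrictMono φ ∧ Tendsto (y ∘ φ) atTop (𝓝 z) := by
  obtain ⟨Q, hQ, hKQ⟩ :=
    IsCompactOperator.image_closedBall_subset_compact (f := (K : H →ₗ[𝕜] G)) hK M
  obtain ⟨b, -, φ, hφ, hb⟩ := hQ.tendsto_subseq (x := fun n ↦ K (y n))
    fun n ↦ hKQ ⟨y n, mem_closedBall_zero_iff.2 (hy n), rfl⟩
  have hclosed := hSK.isClosedEmbedding (S.prod K).uniformContinuous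
  have hlim : Tendsto (S.prod K ∘ (y ∘ φ)) atTop (𝓝 (a, b)) :=
    (hS.comp hφ.tendsto_atTop).prodMk_nhds hb
  obtain ⟨z, hz⟩ := hclosed.isClosed_range.mem_of_tendsto hlim (.of_forall fun n ↦ ⟨_, rfl⟩)
  exact ⟨z, φ, hφ, hclosed.tendsto_nhds_iff.2 (hz ▸ hlim)⟩

theorem exists_pos_mul_norm_mkQ_ker_le (hK : IsCompactOperator K)
    (hSK : AntilipschitzWith C (S.prod K)) :
    ∃ δ > 0, ∀ y, δ * ‖S.ker.mkQ y‖ ≤ ‖S y‖ := by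
  obtain ⟨c, hc⟩ := NormedField.exists_one_lt_norm 𝕜
  suffices ∃ δ > 0, ∀ y, ‖y‖ < 1 → ‖c‖⁻¹ ≤ ‖S.ker.mkQ y‖ → δ ≤ ‖S y‖ from
    this.imp fun δ ⟨hδ, h⟩ ↦ ⟨hδ, mul_norm_mkQ_ker_le_of_shell hc h⟩
  by_contra! hsmall
  choose y hy_lt hy_ge hSy using fun n : ℕ ↦ hsmall (1 / ((n : ℝ) + 1)) Nat.one_div_pos_of_nat
  have hS_zero : Tendsto (fun n ↦ S (y n)) atTop (𝓝 0) :=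
    squeeze_zero_norm (fun n ↦ (hSy n).le) tendsto_one_div_add_atTop_nhds_zero_nat
  obtain ⟨z, φ, hφ, hz⟩ :=
    exists_tendsto_subseq_of_antilipschitzWith_prod hK hSK (fun n ↦ (hy_lt n).le) hS_zero
  have hSz : S z = 0 :=
    tendsto_nhds_unique ((S.continuous.tendsto z).comp hz) (hS_zero.comp hφ.tendsto_atTop)
  have hdist : Tendsto (fun n ↦ ‖y (φ n) - z‖) atTop (𝓝 0) := tendsto_iff_norm_sub_tendsto_zero.1 hz
  have hc_le (n : ℕ) : ‖c‖⁻¹ ≤ ‖y (φ n) - z‖ := by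
    have hmk : S.ker.mkQ (y (φ n) - z) = S.ker.mkQ (y (φ n)) := by
      refine (Submodule.Quotient.eq _).2 ?_
      simpa using hSz
    exact (hy_ge (φ n)).trans (hmk ▸ Submodule.Quotient.norm_mk_le S.ker (y (φ n) - z))
  exact (inv_pos.2 (one_pos.trans hc)).not_ge (ge_of_tendsto' hdist hc_le)

theorem exists_pos_mul_norm_le_of_ker_le [SeminormedAddCommGroup X] [NormedSpace 𝕜 X]
    (hK : IsCompactOperator K) (hSK : AntilipschitzWith C (S.prod K)) {T : H →L[𝕜] X}
    (hST : S.ker ≤ T.ker) : ∃ c > 0, ∀ y, c * ‖T y‖ ≤ ‖S y‖ := by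
  obtain ⟨δ, hδ, hS⟩ := exists_pos_mul_norm_mkQ_ker_le hK hSK
  refine ⟨δ / (‖T‖ + 1), by positivity, fun y ↦ ?_⟩
  calc δ / (‖T‖ + 1) * ‖T y‖ ≤ δ / (‖T‖ + 1) * ((‖T‖ + 1) * ‖S.ker.mkQ y‖) := by
        gcongr
        exact (norm_le_opNorm_mul_norm_mkQ T hST y).trans (by gcongr; linarith)
    _ = δ * ‖S.ker.mkQ y‖ := by field_simp
    _ ≤ ‖S y‖ := hS y

end Peetre

theorem eventually_mul_norm_le_of_tendsto {𝕜 H F X α : Type*} [NontriviallyNormedField 𝕜]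
    [SeminormedAddCommGroup H] [NormedSpace 𝕜 H] [SeminormedAddCommGroup F] [NormedSpace 𝕜 F]
    [SeminormedAddCommGroup X] {l : Filter α} {S : H →L[𝕜] F} {T : H → X} {c c' : ℝ} (hc' : c' < c)
    (hS : ∀ y, c * ‖T y‖ ≤ ‖S y‖) {Sn : α → H →L[𝕜] F} (hSn : Tendsto Sn l (𝓝 S)) (M : ℝ) :
    ∀ᶠ n in l, ∀ y, ‖y‖ ≤ M * ‖T y‖ → c' * ‖T y‖ ≤ ‖Sn n y‖ := by
  have hdiff : Tendsto (fun n ↦ ‖S - Sn n‖ * M) l (𝓝 0) := by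
    simpa using ((tendsto_const_nhds (x := S)).sub hSn).norm.mul_const M
  filter_upwards [hdiff.eventually_le_const (sub_pos.2 hc')] with n hn y hy
  have hpert : ‖S y‖ - ‖Sn n y‖ ≤ (c - c') * ‖T y‖ :=
    calc ‖S y‖ - ‖Sn n y‖ ≤ ‖(S - Sn n) y‖ := norm_sub_norm_le _ _
      _ ≤ ‖S - Sn n‖ * (M * ‖T y‖) := (S - Sn n).le_opNorm_of_le hy
      _ ≤ (c - c') * ‖T y‖ := by rw [← mul_assoc]; gcongr
  linarith [hS y]

section HessianFactor

variable {H G G' : Type*} [NormedAddCommGroup H] [NormedSpace ℝ H]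
  [NormedAddCommGroup G] [NormedSpace ℝ G] [NormedAddCommGroup G'] [NormedSpace ℝ G']
  (ι : H →L[ℝ] G) (D : H →L[ℝ] G') {κ : ℝ}

/-- The operator `y ↦ (ι (y + A y), √κ • D y)`, whose squared norm is the second derivative of the
objective functional at the extension `y` of a boundary control, `A` being the operator `w ↦ η_w` or
a Galerkin approximation of it. The target carries the Hilbertian product norm, so that this is an
identity of squares. -/
noncomputable def hessianFactor (κ : ℝ) (A : H →L[ℝ] H) : H →L[ℝ] WithLp 2 (G × G') :=
  (WithLp.prodContinuousLinearEquiv 2 ℝ G G').symm ∘L (ι ∘L (1 + A)).prod (√κ • D)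

theorem norm_sq_hessianFactor_apply (hκ : 0 ≤ κ) (A : H →L[ℝ] H) (y : H) :
    ‖hessianFactor ι D κ A y‖ ^ 2 = ‖ι (y + A y)‖ ^ 2 + κ * ‖D y‖ ^ 2 := by
  simp [hessianFactor, WithLp.prod_norm_sq_eq_of_L2, norm_smul, mul_pow, Real.sq_sqrt hκ]

theorem continuous_hessianFactor (κ : ℝ) : Continuous (hessianFactor ι D κ) := by
  have hι : Continuous fun A : H →L[ℝ] H ↦ ι ∘L (1 + A) := by fun_prop
  have hprod : Continuous fun A : H →L[ℝ] H ↦ (ι ∘L (1 + A)).prod (√κ • D) :=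
    (ContinuousLinearMap.prodₗᵢ ℝ).continuous.comp (hι.prodMk continuous_const)
  exact continuous_const.clm_comp hprod

variable {ι D}

theorem ker_hessianFactor_le_ker {X : Type*} [SeminormedAddCommGroup X] [NormedSpace ℝ X]
    (hι : Function.Injective ι) {τ : H →L[ℝ] X} {A : H →L[ℝ] H} (hτA : ∀ y, τ (A y) = 0) :
    (hessianFactor ι D κ A).ker ≤ τ.ker := by
  intro y hy
  have hιy : ι (y + A y) = 0 := congrArg WithLp.fst hy
  have hyA : y + A y = 0 := hι (hιy.trans (map_zero ι).symm)
  simpa [hτA] using congrArg τ hyA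

theorem exists_antilipschitzWith_hessianFactor_prod {C : ℝ≥0}
    (hιD : AntilipschitzWith C (ι.prod D)) (hκ : 0 < κ) (A : H →L[ℝ] H) :
    ∃ C', AntilipschitzWith C' ((hessianFactor ι D κ A).prod ι) := by
  let L : WithLp 2 (G × G') × G →L[ℝ] G × G' :=
    (ContinuousLinearMap.snd ℝ _ G).prod ((√κ)⁻¹ • WithLp.sndL 2 ℝ G G' ∘L .fst ℝ _ G)
  have hL (y : H) : L ((hessianFactor ι D κ A).prod ι y) = ι.prod D y := by
    simp [L, hessianFactor, (Real.sqrt_pos.2 hκ).ne']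
  refine ⟨C * ‖L‖₊, ContinuousLinearMap.antilipschitz_of_bound _ fun y ↦ ?_⟩
  calc ‖y‖ ≤ C * ‖ι.prod D y‖ := hιD.le_mul_norm (map_zero _) y
    _ ≤ C * (‖L‖ * ‖(hessianFactor ι D κ A).prod ι y‖) := by
      rw [← hL]
      gcongr
      exact L.le_opNorm _
    _ = ↑(C * ‖L‖₊) * ‖(hessianFactor ι D κ A).prod ι y‖ := by
      rw [NNReal.coe_mul, coe_nnnorm, mul_assoc]

theorem antilipschitzWith_prod_of_norm_sq_eq (hιD : ∀ y, ‖y‖ ^ 2 = ‖ι y‖ ^ 2 + ‖D y‖ ^ 2) :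
    AntilipschitzWith 2 (ι.prod D) := by
  refine (ι.prod D).antilipschitz_of_bound fun y ↦ ?_
  have hι_le : ‖ι y‖ ≤ ‖ι.prod D y‖ := norm_fst_le (ι y, D y)
  have hD_le : ‖D y‖ ≤ ‖ι.prod D y‖ := norm_snd_le (ι y, D y)
  refine abs_le_of_sq_le_sq' ?_ (by positivity) |>.2
  calc ‖y‖ ^ 2 = ‖ι y‖ ^ 2 + ‖D y‖ ^ 2 := hιD y
    _ ≤ ‖ι.prod D y‖ ^ 2 + ‖ι.prod D y‖ ^ 2 := by gcongr
    _ ≤ (((2 : ℝ≥0) : ℝ) * ‖ι.prod D y‖) ^ 2 := by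
      rw [NNReal.coe_ofNat]
      nlinarith [sq_nonneg ‖ι.prod D y‖]

end HessianFactor

theorem discrete_second_derivative_uniformly_coercive_general
    {X H G G' α : Type*} [SeminormedAddCommGroup X] [NormedSpace ℝ X]
    [NormedAddCommGroup H] [NormedSpace ℝ H] [CompleteSpace H]
    [NormedAddCommGroup G] [NormedSpace ℝ G] [NormedAddCommGroup G'] [NormedSpace ℝ G']
    {l : Filter α} {ι : H →L[ℝ] G} (hι_inj : Function.Injective ι) (hι_cpt : IsCompactOperator ι)
    {D : H →L[ℝ] G'} {C : ℝ≥0} (hιD : AntilipschitzWith C (ι.prod D))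
    {τ : H →L[ℝ] X} {R : H →L[ℝ] H} (hτR : ∀ y, τ (R y) = 0) {κ : ℝ} (hκ : 0 < κ)
    {U : α → Set X} {En : α → X →L[ℝ] H} {Rn : α → H →L[ℝ] H} {M : ℝ}
    (hEn_bdd : ∀ᶠ n in l, ‖En n‖ ≤ M) (hEn_trace : ∀ᶠ n in l, ∀ v ∈ U n, τ (En n v) = v)
    (hRn : Tendsto Rn l (𝓝 R)) :
    ∃ ν > 0, ∀ᶠ n in l, ∀ v ∈ U n,
      ν * ‖v‖ ^ 2 ≤ ‖ι (En n v + Rn n (En n v))‖ ^ 2 + κ * ‖D (En n v)‖ ^ 2 := by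
  obtain ⟨C', hC'⟩ := exists_antilipschitzWith_hessianFactor_prod hιD hκ R
  obtain ⟨c, hc, hcoercive⟩ :=
    exists_pos_mul_norm_le_of_ker_le hι_cpt hC' (ker_hessianFactor_le_ker hι_inj hτR)
  have hperturbed := eventually_mul_norm_le_of_tendsto (half_lt_self hc) hcoercive
    (((continuous_hessianFactor ι D κ).tendsto R).comp hRn) M
  refine ⟨(c / 2) ^ 2, by positivity, ?_⟩
  filter_upwards [hEn_bdd, hEn_trace, hperturbed] with n hM htrace hn v hv
  have hbound : c / 2 * ‖v‖ ≤ ‖hessianFactor ι D κ (Rn n) (En n v)‖ := by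
    simpa only [Function.comp_apply, htrace v hv, (En n).le_of_opNorm_le hM v, forall_const]
      using hn (En n v)
  rw [← norm_sq_hessianFactor_apply ι D hκ.le, ← mul_pow]
  gcongr

/-- Theorem 6.1 (abstract form): uniform coercivity of the second derivatives of the
discrete objective functionals on the discrete spaces `U_n`, with `E_n` the discrete
harmonic extensions and `R_n` the Galerkin approximations of `R`. -/
theorem discrete_second_derivative_uniformly_coercive
    {X : Type*} [NormedAddCommGroup X] [InnerProductSpace ℝ X] [CompleteSpace X]
    {H : Type*} [NormedAddCommGroup H] [InnerProductSpace ℝ H] [CompleteSpace H]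
    {G : Type*} [NormedAddCommGroup G] [NormedSpace ℝ G]
    {G' : Type*} [NormedAddCommGroup G'] [NormedSpace ℝ G']
    (ι : H →L[ℝ] G) (hι_inj : Function.Injective ι) (hι_cpt : IsCompactOperator ι)
    (D : H →L[ℝ] G')
    (hnorm : ∀ y : H, ‖y‖ ^ 2 = ‖ι y‖ ^ 2 + ‖D y‖ ^ 2)
    (τ : H →L[ℝ] X)
    (E : X →L[ℝ] H) (R : H →L[ℝ] H)
    (hτE : ∀ v : X, τ (E v) = v)
    (hτR : ∀ y : H, τ (R y) = 0)
    (κ : ℝ) (hκ : 0 < κ)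
    (U : ℕ → Submodule ℝ X)
    (En : ℕ → (X →L[ℝ] H)) (Rn : ℕ → (H →L[ℝ] H))
    (hEn_bdd : ∃ M : ℝ, ∀ n : ℕ, ‖En n‖ ≤ M)
    (hEn_trace : ∀ n : ℕ, ∀ v ∈ U n, τ (En n v) = v)
    (hRn_conv : Filter.Tendsto (fun n => ‖Rn n - R‖) Filter.atTop (nhds 0))
    (hEn_adj_conv : ∀ g : H →L[ℝ] ℝ,
      Filter.Tendsto (fun n => ‖g.comp (En n) - g.comp E‖) Filter.atTop (nhds 0)) :
    ∃ ν > 0, ∃ N : ℕ, ∀ n ≥ N, ∀ v ∈ U n,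
      ‖ι (En n v + Rn n (En n v))‖ ^ 2 + κ * ‖D (En n v)‖ ^ 2 ≥ ν * ‖v‖ ^ 2 := by
  obtain ⟨M, hM⟩ := hEn_bdd
  simpa only [eventually_atTop, SetLike.mem_coe, ge_iff_le] using
    discrete_second_derivative_uniformly_coercive_general hι_inj hι_cpt
      (antilipschitzWith_prod_of_norm_sq_eq hnorm) hτR hκ (.of_forall hM) (.of_forall hEn_trace)
      (tendsto_iff_norm_sub_tendsto_zero.2 hRn_conv)
end

section
/- Let V be a real normed vector space and U ⊆ V a linear subspace. Let T and T_h be continuous bilinear forms on V, let w and w_h be continuous linear functionals on V, and let ν* > 0. Let ū ∈ V, ū_h ∈ U and u*_h ∈ U satisfy: T(ū, v) = w(v) for all v ∈ V; T_h(ū_h, v) = w_h(v) for all v ∈ U; T(u*_h, v) = w(v) for all v ∈ U; and T_h(v, v) ≥ ν* · ‖v‖² for all v ∈ U. Then ν* · ‖u*_h − ū_h‖² ≤ (T_h − T)(ū, u*_h − ū_h) + (w − w_h)(u*_h − ū_h) + (T_h − T)(u*_h − ū, u*_h − ū_h). -/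
/-!
Testing both Galerkin equations with the same `v ∈ U` gives
`Bh (u - uh) v = (Bh - B) u v + (f - fh) v`. Take `v = u - uh`: coercivity bounds the left side from
below, and splitting `u = x + (u - x)` around a reference vector `x` (the exact solution, in the
application) separates the consistency error at `x` from the approximation error `u - x`.
-/

theorem apply_sub_eq_consistency_errors {R M N P : Type*} [CommRing R]
    [AddCommGroup M] [Module R M] [AddCommGroup N] [Module R N] [AddCommGroup P] [Module R P]
    {B Bh : M →ₗ[R] N →ₗ[R] P} {f fh : N →ₗ[R] P} {u uh : M} {v : N}
    (hu : B u v = f v) (huh : Bh uh v = fh v) :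
    Bh (u - uh) v = (Bh - B) u v + (f - fh) v := by
  simp only [map_sub, LinearMap.sub_apply, hu, huh]
  abel

theorem general_error_estimate_general {V : Type*} [AddCommGroup V] [Module ℝ V]
    (p : Seminorm ℝ V) (U : Submodule ℝ V) (B Bh : LinearMap.BilinForm ℝ V)
    (f fh : Module.Dual ℝ V) (ν : ℝ) (x : V) {u uh : V} (hu_mem : u ∈ U) (huh_mem : uh ∈ U)
    (hu : ∀ v ∈ U, B u v = f v) (huh : ∀ v ∈ U, Bh uh v = fh v)
    (hcoer : ∀ v ∈ U, ν * p v ^ 2 ≤ Bh v v) :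
    ν * p (u - uh) ^ 2 ≤
      (Bh - B) x (u - uh) + (f - fh) (u - uh) + (Bh - B) (u - x) (u - uh) := by
  have he : u - uh ∈ U := U.sub_mem hu_mem huh_mem
  calc
    ν * p (u - uh) ^ 2
    _ ≤ Bh (u - uh) (u - uh) := hcoer _ he
    _ = (Bh - B) u (u - uh) + (f - fh) (u - uh) :=
      apply_sub_eq_consistency_errors (hu _ he) (huh _ he)
    _ = (Bh - B) (x + (u - x)) (u - uh) + (f - fh) (u - uh) := by rw [add_sub_cancel]
    _ = (Bh - B) x (u - uh) + (f - fh) (u - uh) + (Bh - B) (u - x) (u - uh) := by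
      rw [map_add, LinearMap.add_apply, add_right_comm]

/-- Lemma 6.6 of the paper (the general estimate): with `T`, `T_h` the continuous and
discrete bilinear forms, `w`, `w_h` the corresponding right-hand sides, `ū` the continuous
optimal control, `ū_h` the discrete one and `u*_h` the finite element solution of the
continuous optimality system in `U`, uniform discrete coercivity yields the basic error
splitting. -/
theorem general_error_estimate
    {V : Type*} [NormedAddCommGroup V] [NormedSpace ℝ V]
    (U : Submodule ℝ V)
    (T Th : V →L[ℝ] V →L[ℝ] ℝ)
    (w wh : V →L[ℝ] ℝ)
    (νstar : ℝ) (hνstar : 0 < νstar)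
    (ubar ubarh ustarh : V)
    (hubarh_mem : ubarh ∈ U) (hustarh_mem : ustarh ∈ U)
    (hubar : ∀ v : V, T ubar v = w v)
    (hubarh : ∀ v ∈ U, Th ubarh v = wh v)
    (hustarh : ∀ v ∈ U, T ustarh v = w v)
    (hcoer : ∀ v ∈ U, Th v v ≥ νstar * ‖v‖ ^ 2) :
    νstar * ‖ustarh - ubarh‖ ^ 2 ≤
      (Th ubar (ustarh - ubarh) - T ubar (ustarh - ubarh))
      + (w (ustarh - ubarh) - wh (ustarh - ubarh))
      + (Th (ustarh - ubar) (ustarh - ubarh) - T (ustarh - ubar) (ustarh - ubarh)) :=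
  general_error_estimate_general (normSeminorm ℝ V) U T.toBilinForm Th.toBilinForm w wh νstar ubar
    hustarh_mem hubarh_mem hustarh hubarh hcoer
end
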